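/- Let p be a prime, A a perfect commutative ring of characteristic p, and R' a W(A)-algebra that is finitely generated and projective as a W(A)-module, such that R'[1/p] is a finite étale W(A)[1/p]-algebra. Let R'' be the integral closure of R' in R'[1/p]. Then R'' is p-adically complete and separated: the natural map R'' → lim_n R''/p^{n+1}R'' is an isomorphism. (Lemma 2.9(2).) -/

import Mathlib

/-!
Let `R` be `a`-adically complete and integrally closed in `F = R[1/a]`, let `K` be finite étale
over `F`, and let `C` be the integral closure of `R` in `K`. If the diagonal idempotent of `K ⊗ K`
is `∑ uⱼ ⊗ vⱼ`, then `x = ∑ Tr(x uⱼ) vⱼ` for all `x`. After multiplying the `uⱼ` and `vⱼ` by a power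
of `a` they are integral over `R`; the traces of integral elements are integral, hence lie in `R`.
So some power of `a` factors on `C` through a finite free `R`-module, and `a`-adic completeness
passes from that module to `C`. Finally, `W(A)` is integrally closed in `W(A)[1/p]` because
`W(A)/p = A` is reduced.
-/

open Polynomial TensorProduct

theorem sub_dvd_aeval_sub_aeval_of_commute {R B : Type*} [CommRing R] [Ring B] [Algebra R B]
    {a b : B} (h : Commute a b) (f : R[X]) : a - b ∣ aeval a f - aeval b f := by
  induction f using Polynomial.induction_on' with
  | add f g hf hg => simpa only [map_add, add_sub_add_comm] using dvd_add hf hg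
  | monomial n r =>
    obtain ⟨c, hc⟩ := h.sub_dvd_pow_sub_pow n
    exact ⟨r • c, by rw [aeval_monomial, aeval_monomial, ← mul_sub, ← Algebra.smul_def, hc,
      mul_smul_comm]⟩

-- The characteristic matrix `X - M` divides `f(X) - f(M) = f(X)`; take determinants.
theorem charpoly_dvd_pow_card_of_aeval_eq_zero {S n : Type*} [CommRing S] [Fintype n]
    [DecidableEq n] (M : Matrix n n S) {f : S[X]} (hf : aeval M f = 0) :
    M.charpoly ∣ f ^ Fintype.card n := by
  have hCM : aeval (C.mapMatrix M) f = 0 := by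
    have := aeval_algHom_apply (CAlgHom (R := S) (A := S)).mapMatrix M f
    rw [hf, map_zero] at this
    exact this
  have hX : aeval (Matrix.scalar n (X : S[X])) f = Matrix.scalar n f := by
    have := aeval_algebraMap_apply (Matrix n n S[X]) (X : S[X]) f
    rwa [aeval_X_left_apply] at this
  have hdvd : M.charmatrix ∣ Matrix.scalar n f := by
    have hcomm : Commute (Matrix.scalar n (X : S[X])) (C.mapMatrix M) :=
      Matrix.scalar_commute _ (Commute.all _) _
    simpa only [hX, hCM, sub_zero, Matrix.charmatrix] using
      sub_dvd_aeval_sub_aeval_of_commute hcomm f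
  obtain ⟨G, hG⟩ := hdvd
  refine ⟨G.det, ?_⟩
  rw [Matrix.charpoly, ← Matrix.det_mul, ← hG, Matrix.scalar_apply, Matrix.det_diagonal,
    Finset.prod_const, Finset.card_univ]

theorem isIntegral_matrix_trace {R S n : Type*} [CommRing R] [CommRing S] [Algebra R S]
    [Fintype n] [DecidableEq n] {M : Matrix n n S} (hM : IsIntegral R M) :
    IsIntegral R M.trace := by
  obtain ⟨f, hf, hfM⟩ := hM
  cases isEmpty_or_nonempty n with
  | inl _ => simpa only [Matrix.trace, Finset.univ_eq_empty, Finset.sum_empty] using isIntegral_zero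
  | inr _ =>
    have hdvd : M.charpoly ∣ (f ^ Fintype.card n).map (algebraMap R S) := by
      rw [Polynomial.map_pow]
      refine charpoly_dvd_pow_card_of_aeval_eq_zero M ?_
      rwa [aeval_map_algebraMap, aeval_def]
    rw [Matrix.trace_eq_neg_charpoly_coeff]
    exact (isIntegral_coeff_of_dvd _ _ (hf.pow _) M.charpoly_monic hdvd _).neg

section ProjectiveTrace

variable {R M : Type*} [CommRing R] [AddCommGroup M] [Module R M] [Module.Finite R M]
  [Module.Projective R M]

variable (R M) in
/-- The trace of an endomorphism of a finite projective module, obtained by contracting its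
preimage in `Dual R M ⊗ M`. It stands in for `LinearMap.trace`, which is zero on modules without a
finite basis. -/
noncomputable def projectiveTrace : Module.End R M →ₗ[R] R :=
  contractLeft R M ∘ₗ (dualTensorHomEquiv R M M).symm.toLinearMap

theorem projectiveTrace_dualTensorHom (f : Module.Dual R M) (m : M) :
    projectiveTrace R M (dualTensorHom R M M (f ⊗ₜ m)) = f m := by
  have : (dualTensorHomEquiv R M M).symm (dualTensorHom R M M (f ⊗ₜ m)) = f ⊗ₜ m :=
    (dualTensorHomEquiv R M M).symm_apply_apply _
  rw [projectiveTrace, LinearMap.comp_apply, LinearEquiv.coe_coe, this, contractLeft_apply]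

theorem end_induction_dualTensorHom {P : Module.End R M → Prop} (φ : Module.End R M)
    (tmul : ∀ f m, P (dualTensorHom R M M (f ⊗ₜ m)))
    (add : ∀ φ ψ, P φ → P ψ → P (φ + ψ)) (zero : P 0) : P φ := by
  obtain ⟨t, rfl⟩ := dualTensorHom_bijective.2 φ
  induction t with
  | zero => rwa [map_zero]
  | tmul f m => exact tmul f m
  | add s t hs ht => rw [map_add]; exact add _ _ hs ht

theorem projectiveTrace_eq_trace_comp {N : Type*} [AddCommGroup N] [Module R N]
    [Module.Finite R N] [Module.Free R N] {i : M →ₗ[R] N} {q : N →ₗ[R] M}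
    (hqi : q ∘ₗ i = LinearMap.id) (φ : Module.End R M) :
    projectiveTrace R M φ = LinearMap.trace R N (i ∘ₗ φ ∘ₗ q) := by
  induction φ using end_induction_dualTensorHom with
  | zero => simp only [map_zero, LinearMap.zero_comp, LinearMap.comp_zero]
  | add φ ψ hφ hψ => simp only [map_add, LinearMap.add_comp, LinearMap.comp_add, hφ, hψ]
  | tmul f m =>
    have hcomp : i ∘ₗ dualTensorHom R M M (f ⊗ₜ m) ∘ₗ q =
        dualTensorHom R N N ((f ∘ₗ q) ⊗ₜ i m) := by
      ext n
      simp
    have hqim : q (i m) = m := LinearMap.congr_fun hqi m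
    rw [hcomp, LinearMap.trace_eq_contract_apply, contractLeft_apply,
      projectiveTrace_dualTensorHom, LinearMap.comp_apply, hqim]

end ProjectiveTrace

theorem aeval_comp_eq_comp_aeval {R S M N : Type*} [CommRing R] [CommRing S]
    [Algebra R S] [AddCommGroup M] [Module S M] [Module R M] [IsScalarTower R S M]
    [AddCommGroup N] [Module S N] [Module R N] [IsScalarTower R S N] {i : M →ₗ[S] N}
    {φ : Module.End S M} {ψ : Module.End S N} (h : ψ ∘ₗ i = i ∘ₗ φ) (f : R[X]) :
    aeval ψ f ∘ₗ i = i ∘ₗ aeval φ f := by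
  induction f using Polynomial.induction_on' with
  | add f g hf hg => simp only [map_add, LinearMap.add_comp, LinearMap.comp_add, hf, hg]
  | monomial n r =>
    have := Module.End.commute_pow_left_of_commute h n
    simp only [aeval_monomial, ← Algebra.smul_def, LinearMap.smul_comp, this]
    ext; simp

theorem isIntegral_comp_swap {R S M N : Type*} [CommRing R] [CommRing S]
    [Algebra R S] [AddCommGroup M] [Module S M] [Module R M] [IsScalarTower R S M]
    [AddCommGroup N] [Module S N] [Module R N] [IsScalarTower R S N]
    {φ : M →ₗ[S] N} {ψ : N →ₗ[S] M} (h : IsIntegral R (ψ ∘ₗ φ : Module.End S M)) :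
    IsIntegral R (φ ∘ₗ ψ : Module.End S N) := by
  obtain ⟨f, hf, hfφ⟩ := h
  refine ⟨f * X, hf.mul monic_X, ?_⟩
  have hfψ : aeval (φ ∘ₗ ψ : Module.End S N) f ∘ₗ φ = 0 := by
    rw [aeval_comp_eq_comp_aeval (φ := ψ ∘ₗ φ) (LinearMap.comp_assoc ..) f, aeval_def, hfφ,
      LinearMap.comp_zero]
  rw [← aeval_def, map_mul, aeval_X, Module.End.mul_eq_comp, ← LinearMap.comp_assoc, hfψ,
    LinearMap.zero_comp]

theorem isIntegral_projectiveTrace {R S M : Type*} [CommRing R] [CommRing S]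
    [Algebra R S] [AddCommGroup M] [Module S M] [Module R M] [IsScalarTower R S M]
    [Module.Finite S M] [Module.Projective S M] {φ : Module.End S M} (hφ : IsIntegral R φ) :
    IsIntegral R (projectiveTrace S M φ) := by
  obtain ⟨d, q, i, -, -, hqi⟩ := Module.Finite.exists_comp_eq_id_of_projective S M
  have h : IsIntegral R (i ∘ₗ φ ∘ₗ q) := by
    apply isIntegral_comp_swap
    rwa [LinearMap.comp_assoc, hqi, LinearMap.comp_id]
  rw [projectiveTrace_eq_trace_comp hqi, LinearMap.trace_eq_matrix_trace S (Pi.basisFun S (Fin d))]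
  exact isIntegral_matrix_trace
    (h.map (LinearMap.toMatrixAlgEquiv (Pi.basisFun S (Fin d))).toAlgHom)

theorem isIntegral_projectiveTrace_mulLeft {R F K : Type*} [CommRing R] [CommRing F] [CommRing K]
    [Algebra R F] [Algebra F K] [Algebra R K] [IsScalarTower R F K] [Module.Finite F K]
    [Module.Projective F K] {x : K} (hx : IsIntegral R x) :
    IsIntegral R (projectiveTrace F K (LinearMap.mulLeft F x)) :=
  isIntegral_projectiveTrace (hx.map ((Algebra.lmul F K).restrictScalars R))

section Unramified

open Algebra.FormallyUnramified (elem one_tmul_mul_elem lmul_elem)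

variable {F K ι : Type*} [CommRing F] [CommRing K] [Algebra F K] [Algebra.FormallyUnramified F K]
  [Fintype ι] {u v : ι → K}

theorem sum_dual_mul_smul [Algebra.EssFiniteType F K] (huv : elem F K = ∑ j, u j ⊗ₜ[F] v j)
    (f : Module.Dual F K) (x : K) :
    ∑ j, f (u j * x) • v j = ∑ j, f (u j) • (v j * x) := by
  have h := congrArg (TensorProduct.lid F K ∘ f.rTensor K) (one_tmul_mul_elem (R := F) x)
  simpa [huv, Finset.mul_sum, mul_comm x] using h.symm

theorem sum_projectiveTrace_comp_mulLeft_smul [Module.Finite F K] [Module.Projective F K]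
    (huv : elem F K = ∑ j, u j ⊗ₜ[F] v j) (φ : Module.End F K) :
    ∑ j, projectiveTrace F K (φ ∘ₗ LinearMap.mulLeft F (u j)) • v j = ∑ j, φ (u j) * v j := by
  induction φ using end_induction_dualTensorHom with
  | zero => simp
  | add φ ψ hφ hψ =>
    simp only [LinearMap.add_comp, map_add, add_smul, LinearMap.add_apply, add_mul,
      Finset.sum_add_distrib, hφ, hψ]
  | tmul f m =>
    have hcomp (y : K) : dualTensorHom F K K (f ⊗ₜ m) ∘ₗ LinearMap.mulLeft F y =
        dualTensorHom F K K ((f ∘ₗ LinearMap.mulLeft F y) ⊗ₜ m) := by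
      ext; simp
    simp only [hcomp, projectiveTrace_dualTensorHom, LinearMap.comp_apply,
      LinearMap.mulLeft_apply, dualTensorHom_apply, smul_mul_assoc, sum_dual_mul_smul huv f m,
      mul_comm m]

variable (F K) in
theorem exists_sum_projectiveTrace_mulLeft_smul_eq [Module.Finite F K] [Module.Projective F K] :
    ∃ (n : ℕ) (u v : Fin n → K),
      ∀ x, ∑ j, projectiveTrace F K (LinearMap.mulLeft F (x * u j)) • v j = x := by
  obtain ⟨n, u, v, huv⟩ := TensorProduct.exists_sum_tmul_eq (elem F K)
  refine ⟨n, u, v, fun x => ?_⟩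
  have hone : ∑ j, u j * v j = 1 := by
    simpa [huv] using lmul_elem (R := F) (S := K)
  simpa [LinearMap.mulLeft_mul, mul_assoc, ← Finset.mul_sum, hone] using
    sum_projectiveTrace_comp_mulLeft_smul huv (LinearMap.mulLeft F x)

end Unramified

theorem isIntegrallyClosedIn_of_isLocalization_away {R K : Type*} [CommRing R] [CommRing K]
    [Algebra R K] {a : R} [IsLocalization.Away a K] (ha : a ∈ nonZeroDivisors R)
    [IsReduced (R ⧸ Ideal.span {a})] : IsIntegrallyClosedIn R K := by
  have hinj : Function.Injective (algebraMap R K) :=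
    IsLocalization.injective K (Submonoid.powers_le.2 ha)
  have hrad : (Ideal.span {a}).IsRadical := (Ideal.isRadical_iff_quotient_reduced _).2 inferInstance
  refine isIntegrallyClosedIn_iff.2 ⟨hinj, fun {x} hx => ?_⟩
  obtain ⟨f, hf, hfx⟩ := hx
  obtain ⟨n, r, hr⟩ := IsLocalization.Away.surj a x
  induction n generalizing r with
  | zero => exact ⟨r, by rw [← hr, pow_zero, mul_one]⟩
  | succ n ih =>
    have hdvd : a ^ (n + 1) ∣ r ^ f.natDegree :=
      dvd_pow_natDegree_of_eval₂_eq_zero hinj hf _ _ x hfx (by rw [← hr, map_pow, mul_comm])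
    obtain ⟨s, rfl⟩ : a ∣ r := Ideal.mem_span_singleton.1 <| hrad ⟨f.natDegree,
      Ideal.mem_span_singleton.2 ((dvd_pow_self a n.succ_ne_zero).trans hdvd)⟩
    refine ih s ((IsLocalization.Away.algebraMap_isUnit a).mul_right_cancel ?_)
    rw [mul_assoc, ← pow_succ, hr, map_mul, mul_comm]

theorem isReduced_of_perfectRing (R : Type*) (p : ℕ) [CommRing R] [Fact p.Prime] [CharP R p]
    [PerfectRing R p] : IsReduced R :=
  (isReduced_iff_pow_one_lt p (Fact.out : p.Prime).one_lt).2 fun x hx =>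
    injective_pow_p R p (by rw [hx, zero_pow (Fact.out : p.Prime).ne_zero])

theorem isIntegrallyClosedIn_wittVector_of_isLocalization_away (p : ℕ) [Fact p.Prime]
    (A : Type*) [CommRing A] [CharP A p] [PerfectRing A p] (K : Type*) [CommRing K]
    [Algebra (WittVector p A) K] [IsLocalization.Away (p : WittVector p A) K] :
    IsIntegrallyClosedIn (WittVector p A) K := by
  have := isReduced_of_perfectRing A p
  have : IsReduced (WittVector p A ⧸ Ideal.span {(p : WittVector p A)}) :=
    isReduced_of_injective (WittVector.quotientPEquiv (k := A)) (RingEquiv.injective _)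
  exact isIntegrallyClosedIn_of_isLocalization_away (a := (p : WittVector p A))
    (mem_nonZeroDivisors_iff_right.2 WittVector.eq_zero_of_p_mul_eq_zero)

section Adic

variable {R M N : Type*} [CommRing R] [AddCommGroup M] [Module R M] [AddCommGroup N] [Module R N]
  {a : R}

theorem smodEq_span_singleton_pow_iff {n : ℕ} {x y : M} :
    x ≡ y [SMOD (Ideal.span {a} ^ n • ⊤ : Submodule R M)] ↔ ∃ z, a ^ n • z = x - y := by
  rw [SModEq.sub_mem, Ideal.span_singleton_pow, Submodule.ideal_span_singleton_smul]
  simp [Submodule.mem_smul_pointwise_iff_exists]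

theorem smodEq_smul_top_map {I : Ideal R} {x y : M}
    (h : x ≡ y [SMOD (I • ⊤ : Submodule R M)]) (f : M →ₗ[R] N) :
    f x ≡ f y [SMOD (I • ⊤ : Submodule R N)] :=
  (h.map f).mono <| (Submodule.map_smul'' ..).trans_le (smul_mono_right _ le_top)

theorem isAdicComplete_of_comp_eq_pow_smul [IsAdicComplete (Ideal.span {a}) N]
    (ha : IsSMulRegular M a) {g : M →ₗ[R] N} {f : N →ₗ[R] M} {k : ℕ}
    (hfg : ∀ x, f (g x) = a ^ k • x) : IsAdicComplete (Ideal.span {a}) M where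
  haus' x hx := by
    have hgx : g x = 0 := IsHausdorff.haus' (I := Ideal.span {a}) _ fun n => by
      simpa only [map_zero] using smodEq_smul_top_map (hx n) g
    exact (ha.pow k).right_eq_zero_of_smul (by rw [← hfg, hgx, map_zero])
  prec' x hx := by
    obtain ⟨y, hy⟩ := IsPrecomplete.prec' (I := Ideal.span {a}) (fun n => g (x n))
      fun hmn => smodEq_smul_top_map (hx hmn) g
    have hlim (n : ℕ) : ∃ z, a ^ n • z = a ^ k • x n - f y := by
      simpa only [hfg] using smodEq_span_singleton_pow_iff.1 (smodEq_smul_top_map (hy n) f)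
    obtain ⟨w, hw⟩ := hlim k
    refine ⟨x k - w, fun n => (hx (Nat.le_add_left n k)).trans ?_⟩
    obtain ⟨z, hz⟩ := hlim (k + n)
    refine smodEq_span_singleton_pow_iff.2 ⟨z, ha.pow k ?_⟩
    simp only [smul_sub, hw, ← mul_smul, ← pow_add, hz]
    abel

theorem isAdicComplete_pi {ι : Type*} [Finite ι] {I : Ideal R} [IsAdicComplete I M] :
    IsAdicComplete I (ι → M) := by
  classical
  cases nonempty_fintype ι
  have h : AdicCompletion.piEquivOfFintype I (fun _ : ι => M) ∘ AdicCompletion.of I (ι → M) =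
      Pi.map fun _ : ι => AdicCompletion.of I M := by
    ext x i n
    simp [AdicCompletion.pi]
  rw [← AdicCompletion.of_bijective_iff,
    ← (AdicCompletion.piEquivOfFintype I (fun _ : ι => M)).bijective.of_comp_iff', h]
  exact .piMap fun _ => AdicCompletion.of_bijective I M

end Adic

section IntegralClosure

theorem exists_pow_forall_isIntegral {R F K ι : Type*} [CommRing R] [CommRing F] [CommRing K]
    [Algebra R F] [Algebra R K] [Algebra F K] [IsScalarTower R F K] [Algebra.IsIntegral F K]
    (a : R) [IsLocalization.Away a F] [Finite ι] (u : ι → K) :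
    ∃ k : ℕ, ∀ i, IsIntegral R (a ^ k • u i) := by
  have h (i : ι) : ∃ k : ℕ, IsIntegral R (a ^ k • u i) := by
    obtain ⟨⟨_, k, rfl⟩, hk⟩ := IsIntegral.exists_multiple_integral_of_isLocalization
      (Submonoid.powers a) (u i) (Algebra.IsIntegral.isIntegral (R := F) (u i))
    exact ⟨k, hk⟩
  choose e he using h
  obtain ⟨k, hk⟩ := Finite.exists_le e
  exact ⟨k, fun i => by
    rw [← Nat.sub_add_cancel (hk i), pow_add, mul_smul]
    exact (he i).smul _⟩

variable {R F K C : Type*} [CommRing R] [CommRing F] [CommRing K] [CommRing C] [Algebra R F]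
  [Algebra R K] [Algebra F K] [IsScalarTower R F K] [Algebra R C] [Algebra C K]
  [IsScalarTower R C K]

theorem exists_linearMap_algebraMap_eq_projectiveTrace [IsIntegrallyClosedIn R F]
    [Module.Finite F K] [Module.Projective F K] [IsIntegralClosure C R K] {y : K}
    (hy : IsIntegral R y) :
    ∃ t : C →ₗ[R] R, ∀ x, algebraMap R F (t x) =
      projectiveTrace F K (LinearMap.mulLeft F (algebraMap C K x * y)) := by
  let T : C →ₗ[R] F := (projectiveTrace F K ∘ₗ LinearMap.mul F K).restrictScalars R ∘ₗ
    LinearMap.mulRight R y ∘ₗ (IsScalarTower.toAlgHom R C K).toLinearMap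
  have hT (x : C) : T x ∈ LinearMap.range (Algebra.linearMap R F) :=
    IsIntegralClosure.isIntegral_iff.1 <| isIntegral_projectiveTrace_mulLeft <|
      (IsIntegralClosure.isIntegral R K x).algebraMap.mul hy
  exact ⟨T.codRestrictOfInjective (Algebra.linearMap R F)
    (IsIntegralClosure.algebraMap_injective R R F) hT,
    fun x => LinearMap.codRestrictOfInjective_comp_apply _ _ _ hT x⟩

variable (F K C) in
theorem exists_comp_eq_pow_smul (a : R) [IsLocalization.Away a F] [IsIntegrallyClosedIn R F]
    [Module.Finite F K] [Module.Projective F K] [Algebra.FormallyUnramified F K]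
    [IsIntegralClosure C R K] :
    ∃ (n k : ℕ) (g : C →ₗ[R] Fin n → R) (f : (Fin n → R) →ₗ[R] C), ∀ x, f (g x) = a ^ k • x := by
  obtain ⟨n, u, v, huv⟩ := exists_sum_projectiveTrace_mulLeft_smul_eq F K
  obtain ⟨k, hk⟩ := exists_pow_forall_isIntegral (F := F) a (Sum.elim u v)
  choose w hw using fun j => (IsIntegralClosure.isIntegral_iff (A := C)).1 (hk (.inr j))
  choose t ht using fun j =>
    exists_linearMap_algebraMap_eq_projectiveTrace (C := C) (F := F) (hk (.inl j))
  refine ⟨n, k + k, LinearMap.pi t, Fintype.linearCombination R w, fun x => ?_⟩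
  apply IsIntegralClosure.algebraMap_injective C R K
  have hsmul (r : R) (c : C) : algebraMap C K (r • c) = r • algebraMap C K c :=
    map_smul (IsScalarTower.toAlgHom R C K) r c
  have hterm (j : Fin n) : algebraMap C K (t j x • w j) = a ^ k •
      projectiveTrace F K (LinearMap.mulLeft F (a ^ k • algebraMap C K x * u j)) • v j := by
    rw [hsmul, hw, ← algebraMap_smul F (t j x), ht, Sum.elim_inl, Sum.elim_inr,
      smul_comm, mul_smul_comm, smul_mul_assoc]
  calc algebraMap C K (Fintype.linearCombination R w (LinearMap.pi t x))
      = ∑ j, algebraMap C K (t j x • w j) := by rw [Fintype.linearCombination_apply, map_sum]; rfl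
    _ = a ^ k • a ^ k • algebraMap C K x := by
      rw [Finset.sum_congr rfl fun j _ => hterm j, ← Finset.smul_sum, huv]
    _ = algebraMap C K (a ^ (k + k) • x) := by rw [hsmul, pow_add, mul_smul]

variable (F K C) in
theorem isAdicComplete_of_isIntegralClosure (a : R) [IsAdicComplete (Ideal.span {a}) R]
    [IsLocalization.Away a F] [IsIntegrallyClosedIn R F] [Module.Finite F K] [Algebra.Etale F K]
    [IsIntegralClosure C R K] : IsAdicComplete (Ideal.span {algebraMap R C a}) C := by
  have := Module.FinitePresentation.of_finite_of_finitePresentation F K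
  have : Module.Projective F K := Module.Flat.projective_of_finitePresentation
  obtain ⟨n, k, g, f, hfg⟩ := exists_comp_eq_pow_smul F K C a
  have hK : IsSMulRegular K a := (isSMulRegular_algebraMap_iff F).1
    ((IsLocalization.Away.algebraMap_isUnit (S := F) a).isSMulRegular K)
  have hC : IsSMulRegular C a := .of_injective (IsScalarTower.toAlgHom R C K)
    (IsIntegralClosure.algebraMap_injective C R K) hK
  have : IsAdicComplete (Ideal.span {a}) (Fin n → R) := isAdicComplete_pi
  rw [← Set.image_singleton, ← Ideal.map_span, IsAdicComplete.map_algebraMap_iff]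
  exact isAdicComplete_of_comp_eq_pow_smul hC hfg

end IntegralClosure

theorem integralClosure_isAdicComplete_wittVector_general
    {R : Type*} [CommRing R] (a : R) [IsAdicComplete (Ideal.span {a}) R]
    (F : Type*) [CommRing F] [Algebra R F] [IsLocalization.Away a F] [IsIntegrallyClosedIn R F]
    (R' : Type*) [CommRing R'] [Algebra R R'] [Algebra.IsIntegral R R']
    (K : Type*) [CommRing K] [Algebra R' K] [Algebra R K] [Algebra F K]
    [IsScalarTower R R' K] [IsScalarTower R F K] [Module.Finite F K] [Algebra.Etale F K] :
    IsAdicComplete (Ideal.span {algebraMap R (integralClosure R' K) a})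
      (integralClosure R' K) := by
  have : IsIntegralClosure (integralClosure R' K) R K :=
    ⟨Subtype.val_injective, fun {x} => by
      rw [← IsIntegralClosure.isIntegral_iff (R := R')]
      exact ⟨IsIntegral.tower_top, isIntegral_trans x⟩⟩
  exact isAdicComplete_of_isIntegralClosure F K (integralClosure R' K) a

/-- **Lemma 2.9(2).** Let `p` be a prime, `A` a perfect commutative ring of characteristic
`p`, and `R'` a `W(A)`-algebra that is finitely generated and projective as a `W(A)`-module
such that `R'[1/p]` is finite étale over `W(A)[1/p]`.  Let `R''` be the integral closure of
`R'` in `R'[1/p]`.  Then `R''` is `p`-adically complete and separated: the natural map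
`R'' → lim_n R''/p^(n+1)R''` is an isomorphism. -/
theorem integralClosure_isAdicComplete_wittVector
    (p : ℕ) [Fact p.Prime]
    (A : Type u) [CommRing A] [CharP A p] [PerfectRing A p]
    (R' : Type u) [CommRing R'] [Algebra (WittVector p A) R']
    [Module.Finite (WittVector p A) R'] [Module.Projective (WittVector p A) R']
    -- `K₀` is the localization `W(A)[1/p]`:
    (K₀ : Type u) [CommRing K₀] [Algebra (WittVector p A) K₀]
    [IsLocalization.Away (p : WittVector p A) K₀]
    -- `K` is the localization `R'[1/p]`:
    (K : Type u) [CommRing K] [Algebra R' K] [IsLocalization.Away (p : R') K]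
    [Algebra (WittVector p A) K] [Algebra K₀ K]
    [IsScalarTower (WittVector p A) R' K] [IsScalarTower (WittVector p A) K₀ K]
    -- `R'[1/p]` is finite étale over `W(A)[1/p]`:
    [Module.Finite K₀ K] [Algebra.Etale K₀ K] :
    IsAdicComplete (Ideal.span {(p : integralClosure R' K)})
      (integralClosure R' K) := by
  have := isIntegrallyClosedIn_wittVector_of_isLocalization_away p A K₀
  simpa only [map_natCast] using
    integralClosure_isAdicComplete_wittVector_general (p : WittVector p A) K₀ R' K
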